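/- Let K be a finite field of characteristic p and order q, and let d be an integer with gcd(d, q − 1) = 1. Suppose that the set {W_{K,d}(a) : a ∈ K^×} equals {0, A, −A} for some nonzero complex number A. Then d ≡ 1 (mod p − 1), |A| = p^k for some positive integer k, and, letting R denote the set of roots of the polynomial (x+1)^d − x^d − 1 in K, one has |A| = sqrt(|R|·q) and sqrt(q) < |A| < q. -/

import Mathlib

open scoped BigOperators Classical

/-- The canonical additive character of a finite field `K` of characteristic `p`:
`ψ_K(x) = exp(2πi · Tr_{K/F_p}(x) / p)`, where `Tr_{K/F_p}` is the absolute trace. -/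
noncomputable def canonicalAddChar (p : ℕ) [Fact p.Prime] (K : Type) [Field K] [Fintype K]
    [Algebra (ZMod p) K] (x : K) : ℂ :=
  Complex.exp (2 * Real.pi * Complex.I * ((Algebra.trace (ZMod p) K x).val : ℂ) / (p : ℂ))

/-- The Weil sum `W_{K,d}(a) = ∑_{x ∈ K} ψ_K(x^d + a·x)`. -/
noncomputable def weilSum (p : ℕ) [Fact p.Prime] (K : Type) [Field K] [Fintype K]
    [Algebra (ZMod p) K] (d : ℤ) (a : K) : ℂ :=
  ∑ x : K, canonicalAddChar p K (x ^ d + a * x)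

/-- The value set `{W_{K,d}(a) : a ∈ K^×}` of the Weil sum. -/
noncomputable def weilValues (p : ℕ) [Fact p.Prime] (K : Type) [Field K] [Fintype K]
    [Algebra (ZMod p) K] (d : ℤ) : Set ℂ :=
  {w : ℂ | ∃ a : K, a ≠ 0 ∧ weilSum p K d a = w}

/-- `d` is degenerate over a finite field of order `q` and characteristic `p` if
`d ≡ p^j (mod q − 1)` for some nonnegative integer `j`. -/
def IsDegenerate (p : ℕ) (q : ℕ) (d : ℤ) : Prop :=
  ∃ j : ℕ, d ≡ (p : ℤ) ^ j [ZMOD (q : ℤ) - 1]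

/-!
Since `gcd(d, q - 1) = 1`, the map `f(x) = x ^ d` is a multiplicative automorphism of `K`, and
`W(a) = W_{K,d}(a)` is the Fourier transform of `ψ ∘ f`, with `W(0) = 0`. Fourier inversion and
convolution give the moments `∑ W = q`, `∑ W² = q²` and `∑ W³ = q² |R|` over `K`. For values in
`{0, A, -A}` they become `A² = q |R|` and `A² N = q²`, where `N` counts the nonzero values; as both
`A` and `-A` occur and `W(0) = 0`, `1 < N < q`. Moreover `q` is an integer multiple of `A`, so the
algebraic integer `A` is a rational integer dividing `q`, up to sign a power of `p`. All `W(a)` are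
then fixed by the Galois automorphisms `ζ_p ↦ ζ_p ^ t`. By injectivity of the Fourier transform this
forces `t ^ d = t` for every `t` in the prime field, that is, `d ≡ 1 (mod p - 1)`.
-/

theorem addChar_ne_one_of_isPrimitive {R M : Type*} [CommRing R] [Nontrivial R] [CommMonoid M]
    {ψ : AddChar R M} (hψ : ψ.IsPrimitive) : ψ ≠ 1 := by
  simpa only [AddChar.mulShift_one] using hψ one_ne_zero

section CharTransform

variable {R F : Type*} [CommRing R] [Fintype R] [CommRing F]

/-- The unnormalised Fourier transform `ĝ(a) = ∑ x, g(x) ψ(a x)` of a function on a finite ring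
with respect to an additive character `ψ`. For `g = ψ ∘ (· ^ d)` this is the Weil sum. -/
def charTransform (ψ : AddChar R F) (g : R → F) (a : R) : F :=
  ∑ x, g x * ψ (a * x)

theorem charTransform_mul (ψ : AddChar R F) (g h : R → F) (a : R) :
    charTransform ψ g a * charTransform ψ h a =
      charTransform ψ (fun z => ∑ x, g x * h (z - x)) a := by
  simp only [charTransform, Finset.sum_mul]
  rw [Finset.sum_comm]
  refine Finset.sum_congr rfl fun x _ => ?_
  rw [Finset.mul_sum, ← Equiv.sum_comp (Equiv.addRight x) fun z => g x * h (z - x) * ψ (a * z)]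
  refine Finset.sum_congr rfl fun y _ => ?_
  simp only [Equiv.coe_addRight, add_sub_cancel_right, mul_add, AddChar.map_add_eq_mul]
  ring

theorem charTransform_comp_zero [IsDomain F] {ψ : AddChar R F} (hψ : ψ ≠ 1) {f : R → R}
    (hf : Function.Bijective f) : charTransform ψ (ψ ∘ f) 0 = 0 := by
  simpa [charTransform, hf.sum_comp ψ] using AddChar.sum_eq_zero_of_ne_one hψ

variable [IsDomain F] {ψ : AddChar R F} (hψ : ψ.IsPrimitive)
include hψ

theorem sum_charTransform_mul_addChar (g : R → F) (y : R) :
    ∑ a, charTransform ψ g a * ψ (a * y) = Fintype.card R * g (-y) := by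
  calc ∑ a, charTransform ψ g a * ψ (a * y)
      = ∑ x, g x * ∑ a, ψ (a * (x + y)) := by
        simp only [charTransform, Finset.sum_mul, Finset.mul_sum]
        rw [Finset.sum_comm]
        simp only [mul_add, AddChar.map_add_eq_mul, mul_assoc]
    _ = Fintype.card R * g (-y) := by
        simp [AddChar.sum_mulShift _ hψ, add_eq_zero_iff_eq_neg, mul_comm]

theorem charTransform_injective (hR : (Fintype.card R : F) ≠ 0) :
    Function.Injective (charTransform ψ) := by
  intro g h hgh
  ext y
  have key := sum_charTransform_mul_addChar hψ g (-y)
  rw [hgh, sum_charTransform_mul_addChar hψ, neg_neg] at key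
  exact (mul_left_cancel₀ hR key).symm

theorem sum_charTransform (g : R → F) :
    ∑ a, charTransform ψ g a = Fintype.card R * g 0 := by
  simpa using sum_charTransform_mul_addChar hψ g 0

theorem sum_charTransform_mul (g h : R → F) :
    ∑ a, charTransform ψ g a * charTransform ψ h a = Fintype.card R * ∑ x, g x * h (-x) := by
  simp only [charTransform_mul, sum_charTransform hψ, zero_sub]

theorem sum_charTransform_mul_mul (g h k : R → F) :
    ∑ a, charTransform ψ g a * charTransform ψ h a * charTransform ψ k a =
      Fintype.card R * ∑ x, ∑ y, g x * h y * k (-(x + y)) := by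
  simp only [charTransform_mul ψ g h, sum_charTransform_mul hψ, Finset.sum_mul]
  rw [Finset.sum_comm]
  congr! 2 with x
  rw [← Equiv.sum_comp (Equiv.addLeft x)]
  simp

theorem sum_charTransform_comp {f : R → R} (hf : f 0 = 0) :
    ∑ a, charTransform ψ (ψ ∘ f) a = Fintype.card R := by
  simp [sum_charTransform hψ, hf]

theorem sum_charTransform_comp_sq {f : R → R} (hf : Function.Odd f) :
    ∑ a, charTransform ψ (ψ ∘ f) a ^ 2 = (Fintype.card R : F) ^ 2 := by
  simp only [sq, sum_charTransform_mul hψ, Function.comp_apply, hf _,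
    ← AddChar.map_add_eq_mul]
  simp

end CharTransform

theorem mulEquiv_odd {R : Type*} [Ring R] [NoZeroDivisors R] (f : R ≃* R) : Function.Odd f := by
  have h_sq : f (-1) * f (-1) = 1 := by rw [← map_mul, neg_mul_neg, one_mul, map_one]
  have h_neg_one : f (-1) = -1 := by
    rcases mul_self_eq_one_iff.1 h_sq with h | h
    · have h_one : (-1 : R) = 1 := f.injective (h.trans (map_one f).symm)
      rw [h_one, map_one]
    · exact h
  intro x
  rw [← neg_one_mul, map_mul, h_neg_one, neg_one_mul]

section ThirdMoment

variable {K F : Type*} [Field K] [Fintype K] [CommRing F] [IsDomain F] {ψ : AddChar K F}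
  (hψ : ψ.IsPrimitive) (f : K ≃* K)
include hψ

theorem sum_sum_addChar_mulEquiv_add_sub :
    ∑ x, ∑ y, ψ (f x + f y - f (x + y)) =
      Fintype.card K * {x : K | f (x + 1) - f x - 1 = 0}.ncard := by
  have h_dilate (x : K) :
      ∑ y, ψ (f x + f y - f (x + y)) = ∑ y, ψ (f x * -(f (y + 1) - f y - 1)) := by
    rcases eq_or_ne x 0 with rfl | hx
    · simp
    rw [← Equiv.sum_comp (Equiv.mulLeft₀ x hx)]
    refine Finset.sum_congr rfl fun y _ => congrArg ψ ?_
    rw [Equiv.mulLeft₀_apply, show x + x * y = x * (y + 1) by ring, map_mul, map_mul]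
    ring
  have h_orthogonal (b : K) : ∑ x, ψ (f x * -b) = if b = 0 then (Fintype.card K : F) else 0 := by
    rw [f.bijective.sum_comp fun x => ψ (x * -b), AddChar.sum_mulShift _ hψ]
    simp
  simp only [h_dilate]
  rw [Finset.sum_comm]
  simp only [h_orthogonal, Set.ncard_eq_toFinset_card', Set.toFinset_ofPred]
  rw [← Finset.sum_filter, Finset.sum_const, nsmul_eq_mul, mul_comm]

theorem sum_charTransform_comp_mulEquiv_pow_three :
    ∑ a, charTransform ψ (ψ ∘ f) a ^ 3 =
      (Fintype.card K : F) ^ 2 * {x : K | f (x + 1) - f x - 1 = 0}.ncard := by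
  simp only [pow_three', sum_charTransform_mul_mul hψ, Function.comp_apply, mulEquiv_odd f _,
    ← AddChar.map_add_eq_mul, ← sub_eq_add_neg, sum_sum_addChar_mulEquiv_add_sub hψ]
  ring

end ThirdMoment

section SymmetricValues

variable {ι F : Type*} [Fintype ι] [CommRing F] {W : ι → F} {A : F}
  (hW : ∀ i, W i ∈ ({0, A, -A} : Set F))
include hW

theorem exists_sum_eq_intCast_mul : ∃ m : ℤ, ∑ i, W i = m * A := by
  have h_mem : ∑ i, W i ∈ AddSubgroup.zmultiples A := by
    refine sum_mem fun i _ => ?_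
    rcases hW i with h | h | h <;> rw [h]
    · exact zero_mem _
    · exact AddSubgroup.mem_zmultiples A
    · exact neg_mem (AddSubgroup.mem_zmultiples A)
  obtain ⟨m, hm⟩ := AddSubgroup.mem_zmultiples_iff.1 h_mem
  exact ⟨m, by rw [← hm, zsmul_eq_mul]⟩

theorem sum_sq_eq_sq_mul_ncard_support :
    ∑ i, W i ^ 2 = A ^ 2 * (Function.support W).ncard := by
  have h_sq (i : ι) : W i ^ 2 = if W i ≠ 0 then A ^ 2 else 0 := by
    rcases hW i with h | h | (h : W i = -A) <;> simp +contextual [h]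
  rw [Finset.sum_congr rfl fun i _ => h_sq i, ← Finset.sum_filter, Finset.sum_const,
    nsmul_eq_mul, mul_comm, Set.ncard_eq_toFinset_card']
  congr 3
  ext i
  simp

theorem sum_pow_three_eq_sq_mul_sum : ∑ i, W i ^ 3 = A ^ 2 * ∑ i, W i := by
  rw [Finset.mul_sum]
  refine Finset.sum_congr rfl fun i _ => ?_
  rcases hW i with h | h | h <;> rw [h] <;> ring

end SymmetricValues

section RootsOfUnity

theorem sum_pow_eq_intCast_of_coprime {ι F : Type*} [CommRing F] [IsDomain F] [CharZero F]
    {n : ℕ} [NeZero n] {ζ : F} (hζ : IsPrimitiveRoot ζ n) {s : Finset ι} {ξ : ι → F}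
    (hξ : ∀ i ∈ s, ξ i ^ n = 1) {m : ℤ} (hm : ∑ i ∈ s, ξ i = m) {t : ℕ} (ht : t.Coprime n) :
    ∑ i ∈ s, ξ i ^ t = m := by
  choose! k _ hk using fun i hi => hζ.eq_pow_of_pow_eq_one (hξ i hi)
  let P : Polynomial ℤ := ∑ i ∈ s, Polynomial.X ^ k i - Polynomial.C m
  have h_aeval (z : F) : Polynomial.aeval z P = ∑ i ∈ s, z ^ k i - m := by simp [P]
  have h_root : Polynomial.aeval ζ P = 0 := by
    rw [h_aeval, Finset.sum_congr rfl hk, hm, sub_self]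
  have h_dvd : minpoly ℤ (ζ ^ t) ∣ P := by
    rw [← hζ.minpoly_eq_pow_coprime ht]
    exact minpoly.isIntegrallyClosed_dvd (hζ.isIntegral (NeZero.pos n)) h_root
  have h_conj : Polynomial.aeval (ζ ^ t) P = 0 :=
    Polynomial.aeval_eq_zero_of_dvd_aeval_eq_zero h_dvd (minpoly.aeval ℤ _)
  rw [h_aeval, sub_eq_zero] at h_conj
  rw [← h_conj]
  exact Finset.sum_congr rfl fun i hi => by rw [← hk i hi, pow_right_comm]

theorem addChar_pow_char {R M : Type*} [Ring R] [CommMonoid M] (p : ℕ) [CharP R p]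
    (ψ : AddChar R M) (x : R) : ψ x ^ p = 1 := by
  rw [← AddChar.map_nsmul_eq_pow, nsmul_eq_mul, CharP.cast_eq_zero, zero_mul,
    AddChar.map_zero_eq_one]

theorem exists_isPrimitiveRoot_of_addChar_ne_one {R M : Type*} [Ring R] [CommMonoid M] (p : ℕ)
    [Fact p.Prime] [CharP R p] {ψ : AddChar R M} (hψ : ψ ≠ 1) : ∃ ζ : M, IsPrimitiveRoot ζ p := by
  obtain ⟨x, hx⟩ := AddChar.ne_one_iff.1 hψ
  exact ⟨ψ x, IsPrimitiveRoot.iff_orderOf.2 (orderOf_eq_prime (addChar_pow_char p ψ x) hx)⟩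

theorem isIntegral_charTransform_comp {R F : Type*} [CommRing R] [Fintype R] [CommRing F]
    (ψ : AddChar R F) (f : R → R) (a : R) : IsIntegral ℤ (charTransform ψ (ψ ∘ f) a) := by
  have h_int (x : R) : IsIntegral ℤ (ψ x) :=
    .of_pow (CharP.char_ne_zero_of_finite R (ringChar R)).bot_lt
      (by rw [addChar_pow_char]; exact isIntegral_one)
  exact IsIntegral.sum _ fun x _ => (h_int _).mul (h_int _)

end RootsOfUnity

section PrimeField

variable {K F : Type*} [Field K] [Fintype K] [CommRing F] [IsDomain F] [CharZero F]
  {ψ : AddChar K F} {f : K ≃* K}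

-- Applying the Galois automorphism `ζ_p ↦ ζ_p ^ t` to a transform value and substituting
-- `y ↦ t⁻¹ y` gives the value at the same point of the transform of `y ↦ ψ (t * f (t⁻¹ * y))`.
theorem addChar_natCast_mul_mulEquiv (p : ℕ) [Fact p.Prime] [CharP K p] (hψ : ψ.IsPrimitive)
    (hint : ∀ a, ∃ m : ℤ, charTransform ψ (ψ ∘ f) a = m) {t : ℕ} (ht : t.Coprime p) (x : K) :
    ψ (t * f x) = ψ (f (t * x)) := by
  have ht0 : (t : K) ≠ 0 := by
    rwa [Ne, CharP.cast_eq_zero_iff K p, ← (Fact.out : p.Prime).coprime_iff_not_dvd,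
      Nat.coprime_comm]
  obtain ⟨ζ, hζ⟩ := exists_isPrimitiveRoot_of_addChar_ne_one p (addChar_ne_one_of_isPrimitive hψ)
  have h_transform :
      charTransform ψ (fun y => ψ (t * f ((t : K)⁻¹ * y))) = charTransform ψ (ψ ∘ f) := by
    ext a
    obtain ⟨m, hm⟩ := hint a
    calc charTransform ψ (fun y => ψ (t * f ((t : K)⁻¹ * y))) a
        = ∑ y, (ψ (f y) * ψ (a * y)) ^ t := by
          rw [charTransform, ← Equiv.sum_comp (Equiv.mulLeft₀ (t : K) ht0)]
          refine Finset.sum_congr rfl fun y _ => ?_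
          rw [Equiv.mulLeft₀_apply, inv_mul_cancel_left₀ ht0, mul_left_comm, mul_pow]
          simp only [← AddChar.map_nsmul_eq_pow, nsmul_eq_mul]
      _ = m := by
          refine sum_pow_eq_intCast_of_coprime hζ (fun y _ => ?_) hm ht
          rw [Function.comp_apply, ← AddChar.map_add_eq_mul, addChar_pow_char]
      _ = charTransform ψ (ψ ∘ f) a := hm.symm
  have h_fun := charTransform_injective hψ (by simp) h_transform
  simpa [inv_mul_cancel_left₀ ht0] using congrFun h_fun (t * x)

theorem mulEquiv_natCast_of_charTransform_intCast (p : ℕ) [Fact p.Prime] [CharP K p]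
    (hψ : ψ.IsPrimitive) (hint : ∀ a, ∃ m : ℤ, charTransform ψ (ψ ∘ f) a = m) (t : ℕ) :
    f t = t := by
  by_cases hpt : p ∣ t
  · rw [(CharP.cast_eq_zero_iff K p t).2 hpt, map_zero]
  have ht : t.Coprime p := ((Fact.out : p.Prime).coprime_iff_not_dvd.2 hpt).symm
  refine AddChar.to_mulShift_inj_of_isPrimitive hψ (AddChar.ext _ _ fun z => ?_)
  obtain ⟨x, rfl⟩ := f.surjective z
  rw [AddChar.mulShift_apply, AddChar.mulShift_apply, ← map_mul,
    addChar_natCast_mul_mulEquiv p hψ hint ht]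

end PrimeField

section ZPow

theorem zpow_injective_of_isCoprime_card {G : Type*} [Group G] {d : ℤ}
    (hd : IsCoprime d (Nat.card G)) : Function.Injective fun x : G => x ^ d := by
  obtain ⟨u, v, huv⟩ := hd
  refine Function.LeftInverse.injective (g := fun x => x ^ u) fun x => ?_
  calc (x ^ d) ^ u = x ^ (u * d + v * Nat.card G) := by
        rw [zpow_add, zpow_mul', zpow_mul' x v, zpow_natCast, pow_card_eq_one', one_zpow, mul_one]
    _ = x := by rw [huv, zpow_one]

variable {G₀ : Type*} [CommGroupWithZero G₀]

theorem zpow_injective₀_of_isCoprime_card_units {d : ℤ} (hd0 : d ≠ 0)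
    (hd : IsCoprime d (Nat.card G₀ˣ)) : Function.Injective fun x : G₀ => x ^ d := by
  intro x y (hxy : x ^ d = y ^ d)
  rcases eq_or_ne y 0 with rfl | hy
  · rwa [zero_zpow d hd0, zpow_eq_zero_iff hd0] at hxy
  have hx : x ≠ 0 := by
    rintro rfl
    rw [zero_zpow d hd0] at hxy
    exact zpow_ne_zero d hy hxy.symm
  lift x to G₀ˣ using hx.isUnit
  lift y to G₀ˣ using hy.isUnit
  norm_cast at hxy ⊢
  exact zpow_injective_of_isCoprime_card hd hxy

/-- The `d`-th power map as a multiplicative automorphism of a finite commutative group with zero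
whose unit group has order coprime to `d`. The exponent `0` is excluded because `0 ^ 0 = 1`. -/
noncomputable def zpowMulEquiv₀ [Finite G₀] {d : ℤ} (hd0 : d ≠ 0)
    (hd : IsCoprime d (Nat.card G₀ˣ)) : G₀ ≃* G₀ :=
  MulEquiv.ofBijective (zpowGroupHom d)
    (Finite.injective_iff_bijective.1 (zpow_injective₀_of_isCoprime_card_units hd0 hd))

theorem coe_zpowMulEquiv₀ [Finite G₀] {d : ℤ} (hd0 : d ≠ 0) (hd : IsCoprime d (Nat.card G₀ˣ)) :
    ⇑(zpowMulEquiv₀ hd0 hd) = fun x : G₀ => x ^ d :=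
  rfl

theorem modEq_one_of_forall_zpow_eq_self {G : Type*} [Group G] [IsCyclic G] {d : ℤ}
    (h : ∀ x : G, x ^ d = x) : d ≡ 1 [ZMOD Nat.card G] := by
  obtain ⟨g, hg⟩ := IsCyclic.exists_ofOrder_eq_natCard (α := G)
  rw [← hg, ← zpow_eq_zpow_iff_modEq, h, zpow_one]

theorem modEq_one_of_forall_natCast_zpow_eq_self (p : ℕ) [Fact p.Prime] {K : Type*}
    [DivisionRing K] [Algebra (ZMod p) K] {d : ℤ} (h : ∀ t : ℕ, (t : K) ^ d = t) :
    d ≡ 1 [ZMOD (p : ℤ) - 1] := by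
  have h_units (u : (ZMod p)ˣ) : u ^ d = u := by
    apply Units.ext
    apply (algebraMap (ZMod p) K).injective
    rw [Units.val_zpow_eq_zpow_val, map_zpow₀, ← ZMod.natCast_zmod_val (u : ZMod p), map_natCast,
      h]
  have h_card : ((Nat.card (ZMod p)ˣ : ℕ) : ℤ) = p - 1 := by
    rw [Nat.card_units, Nat.card_zmod, Nat.cast_pred (Fact.out : p.Prime).pos]
  exact h_card ▸ modEq_one_of_forall_zpow_eq_self h_units

end ZPow

section AlgebraicIntegers

theorem exists_eq_intCast_of_isIntegral {F : Type*} [Field F] [CharZero F] {x : F}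
    (hx : IsIntegral ℤ x) {m k : ℤ} (hm : m ≠ 0) (h : m * x = k) : ∃ n : ℤ, x = n := by
  have hx_rat : x = algebraMap ℚ F (k / m) := by
    rw [eq_ratCast, Rat.cast_div, Rat.cast_intCast, Rat.cast_intCast,
      eq_div_iff (Int.cast_ne_zero.2 hm), mul_comm, h]
  rw [hx_rat, isIntegral_algebraMap_iff (algebraMap ℚ F).injective,
    IsIntegrallyClosed.isIntegral_iff] at hx
  obtain ⟨n, hn⟩ := hx
  exact ⟨n, by rw [hx_rat, ← hn]; simp⟩

end AlgebraicIntegers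

section ThreeValued

variable {K F : Type*} [Field K] [Fintype K] [CommRing F] [IsDomain F] {ψ : AddChar K F}
  (hψ : ψ.IsPrimitive) {f : K ≃* K} {A : F}
  (hW : ∀ a, charTransform ψ (ψ ∘ f) a ∈ ({0, A, -A} : Set F))
include hψ hW

theorem sq_mul_ncard_support_charTransform :
    A ^ 2 * (Function.support (charTransform ψ (ψ ∘ f))).ncard = (Fintype.card K : F) ^ 2 := by
  rw [← sum_sq_eq_sq_mul_ncard_support hW, sum_charTransform_comp_sq hψ (mulEquiv_odd f)]

theorem sq_eq_ncard_roots_mul_card [CharZero F] :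
    A ^ 2 = {x : K | f (x + 1) - f x - 1 = 0}.ncard * (Fintype.card K : F) := by
  have h_moment := sum_pow_three_eq_sq_mul_sum hW
  rw [sum_charTransform_comp_mulEquiv_pow_three hψ, sum_charTransform_comp hψ (map_zero f)]
    at h_moment
  have hq : (Fintype.card K : F) ≠ 0 := by simp
  apply mul_right_cancel₀ hq
  linear_combination -h_moment

theorem exists_intCast_mul_eq_card : ∃ m : ℤ, m * A = (Fintype.card K : F) := by
  obtain ⟨m, hm⟩ := exists_sum_eq_intCast_mul hW
  exact ⟨m, by rw [← hm, sum_charTransform_comp hψ (map_zero f)]⟩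

end ThreeValued

section ThreeValuedField

variable {K F : Type*} [Field K] [Fintype K] [Field F] [CharZero F] {ψ : AddChar K F}
  (hψ : ψ.IsPrimitive) {f : K ≃* K} {A : F}
  (hW : ∀ a, charTransform ψ (ψ ∘ f) a ∈ ({0, A, -A} : Set F))
include hψ hW

theorem exists_eq_intCast_dvd_card (hA : IsIntegral ℤ A) :
    ∃ n : ℤ, A = n ∧ n ∣ Fintype.card K := by
  obtain ⟨m, hm⟩ := exists_intCast_mul_eq_card hψ hW
  have hm0 : m ≠ 0 := by
    rintro rfl
    simp [eq_comm] at hm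
  obtain ⟨n, rfl⟩ := exists_eq_intCast_of_isIntegral hA hm0 (k := Fintype.card K)
    (by rw [hm, Int.cast_natCast])
  exact ⟨n, rfl, m, by rw [mul_comm]; exact_mod_cast hm.symm⟩

theorem mulEquiv_natCast_of_three_valued (p : ℕ) [Fact p.Prime] [CharP K p]
    (hA : IsIntegral ℤ A) (t : ℕ) : f t = t := by
  obtain ⟨n, rfl, -⟩ := exists_eq_intCast_dvd_card hψ hW hA
  refine mulEquiv_natCast_of_charTransform_intCast p hψ (fun a => ?_) t
  rcases hW a with h | h | (h : _ = _)
  · exact ⟨0, by simpa using h⟩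
  · exact ⟨n, h⟩
  · exact ⟨-n, by simpa using h⟩

end ThreeValuedField

section Norm

theorem sqrt_lt_of_sq_mul_eq_sq {x N q : ℝ} (hx : 0 ≤ x) (hN : 0 < N) (hNq : N < q)
    (h : x ^ 2 * N = q ^ 2) : √q < x := by
  have hq : 0 < q := hN.trans hNq
  refine (Real.sqrt_lt_sqrt hq.le (lt_of_mul_lt_mul_right ?_ hN.le)).trans_eq (Real.sqrt_sq hx)
  calc q * N < q * q := mul_lt_mul_of_pos_left hNq hq
    _ = x ^ 2 * N := by rw [h, sq]

theorem lt_of_sq_mul_eq_sq {x N q : ℝ} (hx : x ≠ 0) (hq : 0 ≤ q) (hN : 1 < N)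
    (h : x ^ 2 * N = q ^ 2) : x < q := by
  refine lt_of_pow_lt_pow_left₀ 2 hq ?_
  calc x ^ 2 < x ^ 2 * N := lt_mul_of_one_lt_right (by positivity) hN
    _ = q ^ 2 := h

variable {K : Type*} [Field K] [Fintype K] {ψ : AddChar K ℂ} (hψ : ψ.IsPrimitive) {f : K ≃* K}
  {A : ℂ} (hW : ∀ a, charTransform ψ (ψ ∘ f) a ∈ ({0, A, -A} : Set ℂ))
include hψ hW

theorem norm_eq_sqrt_ncard_roots_mul_card :
    ‖A‖ = √({x : K | f (x + 1) - f x - 1 = 0}.ncard * Fintype.card K) := by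
  have h_sq := congrArg norm (sq_eq_ncard_roots_mul_card hψ hW)
  rw [norm_pow, norm_mul, Complex.norm_natCast, Complex.norm_natCast] at h_sq
  rw [← h_sq, Real.sqrt_sq (norm_nonneg A)]

theorem norm_mem_Ioo_sqrt_card_card (hA : A ≠ 0) {a b : K}
    (ha : charTransform ψ (ψ ∘ f) a = A) (hb : charTransform ψ (ψ ∘ f) b = -A) :
    ‖A‖ ∈ Set.Ioo √(Fintype.card K) (Fintype.card K) := by
  set N := (Function.support (charTransform ψ (ψ ∘ f))).ncard
  have h_norm : ‖A‖ ^ 2 * N = (Fintype.card K : ℝ) ^ 2 := by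
    simpa using congrArg norm (sq_mul_ncard_support_charTransform hψ hW)
  have hN_lt : N < Fintype.card K := by
    have h_zero := charTransform_comp_zero (addChar_ne_one_of_isPrimitive hψ) f.bijective
    rw [← Nat.card_eq_fintype_card]
    exact Set.ncard_lt_card ((Set.ne_univ_iff_exists_notMem _).2
      ⟨0, Function.notMem_support.2 h_zero⟩)
  have one_lt_N : 1 < N := by
    refine (Set.one_lt_ncard).2 ⟨a, ?_, b, ?_, ?_⟩
    · rwa [Function.mem_support, ha]
    · rwa [Function.mem_support, hb, neg_ne_zero]
    · rintro rfl
      exact self_ne_neg.2 hA (ha.symm.trans hb)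
  exact ⟨sqrt_lt_of_sq_mul_eq_sq (norm_nonneg A) (by positivity) (by exact_mod_cast hN_lt) h_norm,
    lt_of_sq_mul_eq_sq (norm_ne_zero_iff.2 hA) (by positivity) (by exact_mod_cast one_lt_N) h_norm⟩

theorem exists_norm_eq_prime_pow (p : ℕ) [CharP K p] (hA : IsIntegral ℤ A) (hA1 : 1 < ‖A‖) :
    ∃ k : ℕ, 0 < k ∧ ‖A‖ = (p : ℝ) ^ k := by
  obtain ⟨n, rfl, hn⟩ := exists_eq_intCast_dvd_card hψ hW hA
  obtain ⟨j, hp, hj⟩ := FiniteField.card K p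
  obtain ⟨k, -, hk⟩ := (Nat.dvd_prime_pow hp).1 (hj ▸ Int.natAbs_dvd_natAbs.2 hn)
  have h_norm : ‖(n : ℂ)‖ = (p : ℝ) ^ k := by
    rw [Complex.norm_intCast, ← Int.cast_abs, Int.abs_eq_natAbs, hk]
    simp
  refine ⟨k, Nat.pos_of_ne_zero ?_, h_norm⟩
  rintro rfl
  exact hA1.ne' (by simpa using h_norm)

end Norm

section WeilSum

variable (p : ℕ) [Fact p.Prime] (K : Type) [Field K] [Algebra (ZMod p) K]

/-- The canonical additive character `canonicalAddChar p K`, bundled as an `AddChar`. -/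
noncomputable def traceAddChar : AddChar K ℂ :=
  (ZMod.stdAddChar (N := p)).compAddMonoidHom (Algebra.trace (ZMod p) K).toAddMonoidHom

theorem isPrimitive_traceAddChar [Finite K] [CharP K p] : (traceAddChar p K).IsPrimitive := by
  obtain rfl := ringChar.eq K p
  obtain ⟨b, hb⟩ := FiniteField.trace_to_zmod_nondegenerate K one_ne_zero
  rw [one_mul] at hb
  refine AddChar.IsPrimitive.of_ne_one (AddChar.ne_one_iff.2 ⟨b, fun h => hb ?_⟩)
  exact ZMod.injective_stdAddChar (h.trans (AddChar.map_zero_eq_one _).symm)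

variable [Fintype K]

theorem coe_traceAddChar : ⇑(traceAddChar p K) = canonicalAddChar p K := by
  ext x
  simpa [canonicalAddChar, traceAddChar] using
    ZMod.stdAddChar_coe (N := p) ((Algebra.trace (ZMod p) K x).val : ℤ)

theorem weilSum_eq_charTransform (d : ℤ) :
    weilSum p K d = charTransform (traceAddChar p K) (traceAddChar p K ∘ (· ^ d)) := by
  ext a
  simp only [weilSum, charTransform, ← coe_traceAddChar, AddChar.map_add_eq_mul,
    Function.comp_apply]

variable {p K} {d : ℤ} (hd : Int.gcd d ((Fintype.card K : ℤ) - 1) = 1)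
include hd

theorem isCoprime_natCard_units_of_gcd : IsCoprime d (Nat.card Kˣ) := by
  rwa [Int.isCoprime_iff_gcd_eq_one, Nat.card_units, Nat.card_eq_fintype_card,
    Nat.cast_pred Fintype.card_pos]

theorem exists_mulEquiv_weilSum_eq_charTransform (hd0 : d ≠ 0) :
    ∃ f : K ≃* K, ⇑f = (· ^ d) ∧
      weilSum p K d = charTransform (traceAddChar p K) (traceAddChar p K ∘ f) :=
  ⟨zpowMulEquiv₀ hd0 (isCoprime_natCard_units_of_gcd hd), coe_zpowMulEquiv₀ _ _,
    weilSum_eq_charTransform p K d⟩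

theorem ne_zero_of_weilSum_ne {a b : K} (ha : a ≠ 0) (hb : b ≠ 0)
    (hab : weilSum p K d a ≠ weilSum p K d b) : d ≠ 0 := by
  have h_card : 2 < Fintype.card K :=
    Fintype.two_lt_card_iff.2 ⟨0, a, b, ha.symm, hb.symm, fun h => hab (congrArg _ h)⟩
  rintro rfl
  rw [Int.gcd_zero_left] at hd
  omega

end WeilSum

theorem stmt2 (p : ℕ) [Fact p.Prime] (K : Type) [Field K] [Fintype K] [CharP K p]
    [Algebra (ZMod p) K]
    (d : ℤ) (hd : Int.gcd d ((Fintype.card K : ℤ) - 1) = 1)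
    (A : ℂ) (hA : A ≠ 0)
    (hval : weilValues p K d = {0, A, -A}) :
    d ≡ 1 [ZMOD (p : ℤ) - 1] ∧
    (∃ k : ℕ, 0 < k ∧ ‖A‖ = (p : ℝ) ^ k) ∧
    ‖A‖ =
      Real.sqrt (({x : K | (x + 1) ^ d - x ^ d - 1 = 0} : Set K).ncard * Fintype.card K) ∧
    Real.sqrt (Fintype.card K) < ‖A‖ ∧
    ‖A‖ < Fintype.card K := by
  obtain ⟨a, ha, hWa⟩ : A ∈ weilValues p K d := by simp [hval]
  obtain ⟨b, hb, hWb⟩ : -A ∈ weilValues p K d := by simp [hval]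
  have hd0 : d ≠ 0 := ne_zero_of_weilSum_ne hd ha hb (by rw [hWa, hWb]; exact self_ne_neg.2 hA)
  have hψ := isPrimitive_traceAddChar p K
  obtain ⟨f, hf, hweil⟩ := exists_mulEquiv_weilSum_eq_charTransform (p := p) hd hd0
  have hW (c : K) :
      charTransform (traceAddChar p K) (traceAddChar p K ∘ f) c ∈ ({0, A, -A} : Set ℂ) := by
    rcases eq_or_ne c 0 with rfl | hc
    · exact .inl (charTransform_comp_zero (addChar_ne_one_of_isPrimitive hψ) f.bijective)
    · exact hval ▸ ⟨c, hc, congrFun hweil c⟩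
  rw [hweil] at hWa hWb
  have hA_int : IsIntegral ℤ A := hWa ▸ isIntegral_charTransform_comp _ f a
  have h_mod := mulEquiv_natCast_of_three_valued hψ hW p hA_int
  have h_norm := norm_eq_sqrt_ncard_roots_mul_card hψ hW
  simp only [hf] at h_mod h_norm
  obtain ⟨h_sqrt_lt, h_lt⟩ := norm_mem_Ioo_sqrt_card_card hψ hW hA hWa hWb
  have h_one_lt : 1 < ‖A‖ :=
    (Real.one_le_sqrt.2 (Nat.one_le_cast.2 Fintype.card_pos)).trans_lt h_sqrt_lt
  exact ⟨modEq_one_of_forall_natCast_zpow_eq_self p h_mod,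
    exists_norm_eq_prime_pow hψ hW p hA_int h_one_lt, h_norm, h_sqrt_lt, h_lt⟩
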